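/- arXiv:2210.02215 — 2 statements merged into one kernel-verified Lean document; each statement's English description precedes it below -/
import Mathlib

section
/- Le Cam's lemma for (ε,δ)-DP: if M : X^n → Y is (ε,δ)-differentially private, then for any test function Ψ : Y → {1,2} and any probability distributions P_1, P_2 on X^n, max_{i∈{1,2}} P_{X∼P_i,M}(Ψ(M(X)) ≠ i) ≥ (1/2)·max{ 1 − TV(P_1,P_2), 1 − (1 − e^{−nε} + 2n e^{−ε} δ)·TV(P_1,P_2) }. Furthermore, when P_1 = p_1^{⊗n} and P_2 = p_2^{⊗n} are product distributions, max_{i∈{1,2}} P_{X∼P_i,M}(Ψ(M(X)) ≠ i) ≥ (1/2)·( (1 − (1 − e^{−ε})·TV(p_1,p_2))^n − 2n e^{−ε} δ·TV(p_1,p_2) ). -/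
open MeasureTheory ProbabilityTheory Real
open scoped ENNReal NNReal

variable {𝓧 𝓨 : Type*} [MeasurableSpace 𝓧] [MeasurableSpace 𝓨]

/-- A randomized mechanism `M : 𝓧^n → 𝓨` (a Markov kernel) is `(ε, δ)`-differentially
private if for any two datasets at Hamming distance at most `1` and any measurable event `S`,
`P(M(x) ∈ S) ≤ e^ε P(M(y) ∈ S) + δ`. -/
def IsDP [DecidableEq 𝓧] {n : ℕ} (M : Kernel (Fin n → 𝓧) 𝓨) (ε δ : ℝ) : Prop :=
  ∀ x y : Fin n → 𝓧, hammingDist x y ≤ 1 →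
    ∀ S : Set 𝓨, MeasurableSet S →
      M x S ≤ ENNReal.ofReal (Real.exp ε) * M y S + ENNReal.ofReal δ

/-- The total variation distance between two measures:
`TV(P, Q) = sup { P(S) - Q(S) | S measurable }`. -/
noncomputable def tvDist {α : Type*} [MeasurableSpace α] (P Q : Measure α) : ℝ :=
  ⨆ S : {S : Set α // MeasurableSet S}, ((P S.1).toReal - (Q S.1).toReal)

/-!
Following a path of neighbouring datasets, an `(ε, δ)`-DP mechanism `M` sends datasets at Hamming
distance `k` to laws at total variation distance at most `1 - e^{-kε} + k e^{-ε} δ`.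
Averaging this bound over a maximal coupling of `P` and `Q` shows that `M` contracts total
variation. For product distributions the coupling is taken coordinatewise: the Hamming distance is
then at most a binomial variable `N` with success probability `t = TV(p, q)`, and
`E[e^{-εN}] = (1 - (1 - e^{-ε}) t)^n`, `E[N] = n t`. The classical two-point bound
`(1 - TV) / 2` applied to the output laws gives both inequalities, even with `n` in place of `2 n`.
-/

section TotalVariation

variable {α : Type*} [MeasurableSpace α] {p q : Measure α}

lemma tvDist_le {c : ℝ} (h : ∀ S, MeasurableSet S → p.real S - q.real S ≤ c) : tvDist p q ≤ c :=
  have : Nonempty {S : Set α // MeasurableSet S} := ⟨⟨∅, .empty⟩⟩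
  ciSup_le fun S => h S.1 S.2

lemma measureReal_sub_le_tvDist [IsFiniteMeasure p] {S : Set α} (hS : MeasurableSet S) :
    p.real S - q.real S ≤ tvDist p q := by
  refine le_ciSup (f := fun S : {S : Set α // MeasurableSet S} => p.real S.1 - q.real S.1)
    ⟨p.real Set.univ, ?_⟩ ⟨S, hS⟩
  rintro _ ⟨T, rfl⟩
  exact (sub_le_self _ measureReal_nonneg).trans (measureReal_mono (Set.subset_univ _))

lemma tvDist_nonneg [IsFiniteMeasure p] : 0 ≤ tvDist p q := by
  simpa using measureReal_sub_le_tvDist (p := p) (q := q) MeasurableSet.empty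

lemma tvDist_le_one [IsProbabilityMeasure p] : tvDist p q ≤ 1 :=
  tvDist_le fun _ _ => (sub_le_self _ measureReal_nonneg).trans measureReal_le_one

lemma half_one_sub_tvDist_le_max [IsProbabilityMeasure p] {Ψ : α → Fin 2} (hΨ : Measurable Ψ) :
    (1 / 2 : ℝ) * (1 - tvDist p q) ≤ max (p.real {y | Ψ y ≠ 0}) (q.real {y | Ψ y ≠ 1}) := by
  have hS : MeasurableSet {y | Ψ y = 0} := hΨ (measurableSet_singleton 0)
  have hp : p.real {y | Ψ y ≠ 0} = 1 - p.real {y | Ψ y = 0} := probReal_compl_eq_one_sub hS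
  have hq : {y | Ψ y ≠ 1} = {y | Ψ y = 0} := by
    ext y
    simp only [Set.mem_ofPred_eq]
    lia
  rw [hp, hq]
  linarith [measureReal_sub_le_tvDist (p := p) (q := q) hS,
    le_max_left (1 - p.real {y | Ψ y = 0}) (q.real {y | Ψ y = 0}),
    le_max_right (1 - p.real {y | Ψ y = 0}) (q.real {y | Ψ y = 0})]

end TotalVariation

section MaximalCoupling

variable {α β Ω : Type*} [MeasurableSpace α] [MeasurableSpace β] [MeasurableSpace Ω]

/-- `X` and `Y`, defined on `(Ω, γ)`, form a maximal coupling of `p` and `q`: they have these laws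
and agree outside an event `D` of probability `tvDist p q`. The event is part of the data because
`{ω | X ω ≠ Y ω}` need not be measurable. -/
structure IsMaximalCoupling (γ : Measure Ω) (X Y : Ω → α) (D : Set Ω) (p q : Measure α) :
    Prop where
  fst : MeasurePreserving X γ p
  snd : MeasurePreserving Y γ q
  measurableSet : MeasurableSet D
  eq_of_notMem : ∀ ω ∉ D, X ω = Y ω
  measureReal_eq : γ.real D = tvDist p q

lemma isProbabilityMeasure_of_measurePreserving {γ : Measure Ω} {X : Ω → α} {p : Measure α}
    [IsProbabilityMeasure p] (hX : MeasurePreserving X γ p) : IsProbabilityMeasure γ :=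
  have : IsProbabilityMeasure (γ.map X) := hX.map_eq.symm ▸ inferInstance
  Measure.isProbabilityMeasure_of_map X

lemma tvDist_le_measureReal_of_coupling {γ : Measure Ω} [IsFiniteMeasure γ] {X Y : Ω → α}
    {D : Set Ω} {p q : Measure α} (hX : MeasurePreserving X γ p) (hY : MeasurePreserving Y γ q)
    (hXY : ∀ ω ∉ D, X ω = Y ω) : tvDist p q ≤ γ.real D := by
  refine tvDist_le fun S hS => ?_
  have hsub : X ⁻¹' S ⊆ Y ⁻¹' S ∪ D := fun ω hω => by
    by_cases hD : ω ∈ D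
    · exact .inr hD
    · exact .inl (by simpa only [Set.mem_preimage, ← hXY ω hD] using hω)
  have hle : γ.real (X ⁻¹' S) ≤ γ.real (Y ⁻¹' S) + γ.real D :=
    (measureReal_mono hsub).trans (measureReal_union_le _ _)
  rw [hX.measureReal_preimage hS.nullMeasurableSet,
    hY.measureReal_preimage hS.nullMeasurableSet] at hle
  linarith

lemma exists_common_part (p q : Measure α) [IsFiniteMeasure p] [IsFiniteMeasure q] :
    ∃ m a b : Measure α, m + a = p ∧ m + b = q ∧ a.real Set.univ ≤ tvDist p q := by
  obtain ⟨s, hs⟩ := exists_isHahnDecomposition q p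
  have ha : p.restrict s - q.restrict s + q.restrict s = p.restrict s :=
    Measure.sub_add_cancel_of_le hs.le_on
  have hb : q.restrict sᶜ - p.restrict sᶜ + p.restrict sᶜ = q.restrict sᶜ :=
    Measure.sub_add_cancel_of_le hs.ge_on_compl
  refine ⟨q.restrict s + p.restrict sᶜ, p.restrict s - q.restrict s,
    q.restrict sᶜ - p.restrict sᶜ, ?_, ?_, ?_⟩
  · rw [add_right_comm, add_comm (q.restrict s), ha,
      Measure.restrict_add_restrict_compl hs.measurableSet]
  · rw [add_assoc, add_comm (p.restrict sᶜ), hb,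
      Measure.restrict_add_restrict_compl hs.measurableSet]
  · have hmass : (p.restrict s - q.restrict s).real Set.univ + q.real s = p.real s := by
      rw [← measureReal_restrict_apply_univ s, ← measureReal_add_apply, ha,
        measureReal_restrict_apply_univ]
    linarith [measureReal_sub_le_tvDist (p := p) (q := q) hs.measurableSet]

lemma exists_measure_fst_snd_eq (a : Measure α) (b : Measure β) [IsFiniteMeasure a]
    [SFinite b] (hab : a Set.univ = b Set.univ) :
    ∃ τ : Measure (α × β), τ.fst = a ∧ τ.snd = b := by
  rcases eq_or_ne (a Set.univ) 0 with h0 | h0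
  · have ha : a = 0 := Measure.measure_univ_eq_zero.1 h0
    have hb : b = 0 := Measure.measure_univ_eq_zero.1 (hab.symm.trans h0)
    exact ⟨0, by rw [ha, Measure.fst_zero], by rw [hb, Measure.snd_zero]⟩
  · have hinv : (a Set.univ)⁻¹ * a Set.univ = 1 := ENNReal.inv_mul_cancel h0 (measure_ne_top a _)
    refine ⟨(a Set.univ)⁻¹ • a.prod b, ?_, ?_⟩
    · rw [Measure.fst, Measure.map_smul, Measure.map_fst_prod, ← hab, smul_smul, hinv, one_smul]
    · rw [Measure.snd, Measure.map_smul, Measure.map_snd_prod, smul_smul, hinv, one_smul]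

lemma map_sumElim_add {m : Measure α} {τ : Measure β} {f : α → Ω} {g : β → Ω} (hf : Measurable f)
    (hg : Measurable g) :
    (m.map Sum.inl + τ.map Sum.inr).map (Sum.elim f g) = m.map f + τ.map g := by
  have hfg : Measurable (Sum.elim f g) := hf.sumElim hg
  rw [Measure.map_add _ _ hfg, Measure.map_map hfg measurable_inl,
    Measure.map_map hfg measurable_inr, Sum.elim_comp_inl, Sum.elim_comp_inr]

-- The left summand carries the common part of `p` and `q`, the right one a coupling of the two
-- excesses. A coupling on `α × α` alone would need a measurable diagonal.
lemma exists_isMaximalCoupling (p q : Measure α) [IsProbabilityMeasure p]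
    [IsProbabilityMeasure q] :
    ∃ γ : Measure (α ⊕ α × α), IsMaximalCoupling γ (Sum.elim id Prod.fst) (Sum.elim id Prod.snd)
      (Set.range Sum.inr) p q := by
  obtain ⟨m, a, b, hp, hq, ha⟩ := exists_common_part p q
  have : IsFiniteMeasure m := isFiniteMeasure_of_le p (hp ▸ Measure.le_add_right le_rfl)
  have : IsFiniteMeasure a := isFiniteMeasure_of_le p (hp ▸ Measure.le_add_left le_rfl)
  have : IsFiniteMeasure b := isFiniteMeasure_of_le q (hq ▸ Measure.le_add_left le_rfl)
  have hab : a Set.univ = b Set.univ := by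
    rw [← ENNReal.add_right_inj (measure_ne_top m Set.univ), ← Measure.add_apply,
      ← Measure.add_apply, hp, hq, measure_univ, measure_univ]
  obtain ⟨τ, hτa, hτb⟩ := exists_measure_fst_snd_eq a b hab
  set γ : Measure (α ⊕ α × α) := m.map Sum.inl + τ.map Sum.inr with hγ
  have hX : MeasurePreserving (Sum.elim id Prod.fst) γ p :=
    ⟨measurable_id.sumElim measurable_fst, by
      rw [map_sumElim_add measurable_id measurable_fst, Measure.map_id, ← Measure.fst, hτa, hp]⟩
  have hY : MeasurePreserving (Sum.elim id Prod.snd) γ q :=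
    ⟨measurable_id.sumElim measurable_snd, by
      rw [map_sumElim_add measurable_id measurable_snd, Measure.map_id, ← Measure.snd, hτb, hq]⟩
  have : IsProbabilityMeasure γ := isProbabilityMeasure_of_measurePreserving hX
  have hXY : ∀ ω ∉ Set.range Sum.inr,
      (Sum.elim id Prod.fst ω : α) = Sum.elim id Prod.snd ω := by
    rintro (x | z) hω
    · rfl
    · exact absurd ⟨z, rfl⟩ hω
  have hD : γ (Set.range Sum.inr) = a Set.univ := by
    rw [hγ, Measure.add_apply, Measure.map_apply measurable_inl measurableSet_range_inr,
      Measure.map_apply measurable_inr measurableSet_range_inr, Set.preimage_inl_range_inr,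
      measure_empty, zero_add, Set.preimage_range, ← Measure.fst_univ, hτa]
  refine ⟨γ, hX, hY, measurableSet_range_inr, hXY, le_antisymm ?_
    (tvDist_le_measureReal_of_coupling hX hY hXY)⟩
  rwa [measureReal_def, hD]

end MaximalCoupling

section DataProcessing

variable {α β Ω : Type*} [MeasurableSpace α] [MeasurableSpace β] [MeasurableSpace Ω]

lemma integrable_measureReal_kernel (κ : Kernel α β) [IsFiniteKernel κ] (μ : Measure α)
    [IsFiniteMeasure μ] {S : Set β} (hS : MeasurableSet S) :
    Integrable (fun x => (κ x).real S) μ := by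
  refine integrable_toReal_of_lintegral_ne_top (κ.measurable_coe hS).aemeasurable ?_
  rw [← Measure.bind_apply hS κ.aemeasurable]
  exact measure_ne_top (κ ∘ₘ μ) S

lemma measureReal_comp_eq_integral (κ : Kernel α β) [IsFiniteKernel κ] (μ : Measure α)
    {S : Set β} (hS : MeasurableSet S) : (κ ∘ₘ μ).real S = ∫ x, (κ x).real S ∂μ := by
  rw [measureReal_def, Measure.bind_apply hS κ.aemeasurable]
  exact (integral_toReal (κ.measurable_coe hS).aemeasurable
    (.of_forall fun x => measure_lt_top (κ x) S)).symm

lemma tvDist_comp_le_integral (κ : Kernel α β) [IsFiniteKernel κ] {γ : Measure Ω}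
    [IsFiniteMeasure γ] {X Y : Ω → α} {P Q : Measure α} (hX : MeasurePreserving X γ P)
    (hY : MeasurePreserving Y γ Q) {c : Ω → ℝ} (hc : Integrable c γ)
    (hκ : ∀ ω, tvDist (κ (X ω)) (κ (Y ω)) ≤ c ω) :
    tvDist (κ ∘ₘ P) (κ ∘ₘ Q) ≤ ∫ ω, c ω ∂γ := by
  refine tvDist_le fun S hS => ?_
  have hcomp {Z : Ω → α} {μ : Measure α} (hZ : MeasurePreserving Z γ μ) :
      (κ ∘ₘ μ).real S = ∫ ω, (κ (Z ω)).real S ∂γ := by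
    rw [measureReal_comp_eq_integral κ μ hS, ← hZ.map_eq]
    exact integral_map hZ.aemeasurable
      (κ.measurable_coe hS).ennreal_toReal.aestronglyMeasurable
  have hint {Z : Ω → α} (hZ : Measurable Z) : Integrable (fun ω => (κ (Z ω)).real S) γ :=
    integrable_measureReal_kernel (κ.comap Z hZ) γ hS
  rw [hcomp hX, hcomp hY, ← integral_sub (hint hX.measurable) (hint hY.measurable)]
  exact integral_mono ((hint hX.measurable).sub (hint hY.measurable)) hc fun ω =>
    (measureReal_sub_le_tvDist hS).trans (hκ ω)

lemma tvDist_comp_le_mul_tvDist (κ : Kernel α β) [IsFiniteKernel κ] {c : ℝ}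
    (hκ : ∀ x y, tvDist (κ x) (κ y) ≤ c) (P Q : Measure α) [IsProbabilityMeasure P]
    [IsProbabilityMeasure Q] : tvDist (κ ∘ₘ P) (κ ∘ₘ Q) ≤ c * tvDist P Q := by
  obtain ⟨γ, hγ⟩ := exists_isMaximalCoupling P Q
  have : IsProbabilityMeasure γ := isProbabilityMeasure_of_measurePreserving hγ.fst
  have hle := tvDist_comp_le_integral κ hγ.fst hγ.snd
    (c := (Set.range Sum.inr).indicator fun _ => c)
    ((integrable_const c).indicator hγ.measurableSet) fun ω => by
      by_cases hω : ω ∈ Set.range Sum.inr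
      · simpa only [Set.indicator_of_mem hω] using hκ _ _
      · rw [Set.indicator_of_notMem hω, hγ.eq_of_notMem ω hω]
        exact tvDist_le fun S _ => (sub_self _).le
  rwa [integral_indicator_const c hγ.measurableSet, hγ.measureReal_eq, smul_eq_mul,
    mul_comm] at hle

end DataProcessing

section HitCount

variable {ι Ω : Type*} [Fintype ι]

/-- The number of coordinates of `ω` lying in `D`; under a product measure `γ^{⊗ι}` it is binomial
with success probability `γ D`. -/
noncomputable def hitCount (D : Set Ω) (ω : ι → Ω) : ℕ :=
  ∑ i, D.indicator 1 (ω i)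

lemma hammingDist_comp_le_hitCount {α : Type*} [DecidableEq α] {X Y : Ω → α} {D : Set Ω}
    (hXY : ∀ ω ∉ D, X ω = Y ω) (ω : ι → Ω) :
    hammingDist (fun i => X (ω i)) (fun i => Y (ω i)) ≤ hitCount D ω := by
  rw [hammingDist, Finset.card_filter, hitCount]
  refine Finset.sum_le_sum fun i _ => ?_
  by_cases hi : ω i ∈ D
  · rw [Set.indicator_of_mem hi, Pi.one_apply]
    split_ifs <;> lia
  · simp only [hXY _ hi, ne_eq, not_true_eq_false, if_false, zero_le]

lemma cast_hitCount (D : Set Ω) (ω : ι → Ω) :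
    (hitCount D ω : ℝ) = ∑ i, D.indicator 1 (ω i) := by
  rw [hitCount, Nat.cast_sum]
  refine Finset.sum_congr rfl fun i _ => ?_
  by_cases hi : ω i ∈ D
  · simp only [Set.indicator_of_mem hi, Pi.one_apply, Nat.cast_one]
  · simp only [Set.indicator_of_notMem hi, Nat.cast_zero]

lemma pow_hitCount (a : ℝ) (D : Set Ω) (ω : ι → Ω) :
    a ^ hitCount D ω = ∏ i, (1 - (1 - a) * D.indicator 1 (ω i)) := by
  rw [hitCount, ← Finset.prod_pow_eq_pow_sum]
  refine Finset.prod_congr rfl fun i _ => ?_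
  by_cases hi : ω i ∈ D
  · simp only [Set.indicator_of_mem hi, Pi.one_apply, pow_one, mul_one, sub_sub_cancel]
  · simp only [Set.indicator_of_notMem hi, pow_zero, mul_zero, sub_zero]

variable [MeasurableSpace Ω] (γ : Measure Ω) {D : Set Ω}

lemma integrable_hitCount [IsFiniteMeasure γ] (hD : MeasurableSet D) :
    Integrable (fun ω : ι → Ω => (hitCount D ω : ℝ)) (Measure.pi fun _ => γ) := by
  simp only [cast_hitCount]
  exact integrable_finsetSum _ fun i _ =>
    integrable_comp_eval (i := i) ((integrable_const (1 : ℝ)).indicator hD)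

lemma integral_hitCount [IsProbabilityMeasure γ] (hD : MeasurableSet D) :
    ∫ ω : ι → Ω, (hitCount D ω : ℝ) ∂(Measure.pi fun _ => γ) = Fintype.card ι * γ.real D := by
  have hint : Integrable (D.indicator (1 : Ω → ℝ)) γ := (integrable_const (1 : ℝ)).indicator hD
  have heval (i : ι) :
      ∫ ω : ι → Ω, D.indicator (1 : Ω → ℝ) (ω i) ∂(Measure.pi fun _ => γ) = γ.real D := by
    rw [integral_comp_eval (μ := fun _ : ι => γ) hint.aestronglyMeasurable,
      integral_indicator_one hD]
  simp only [cast_hitCount]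
  rw [integral_finsetSum _ fun i _ => integrable_comp_eval (i := i) hint]
  simp only [heval, Finset.sum_const, Finset.card_univ, nsmul_eq_mul]

lemma integrable_pow_hitCount [IsFiniteMeasure γ] (hD : MeasurableSet D) (a : ℝ) :
    Integrable (fun ω : ι → Ω => a ^ hitCount D ω) (Measure.pi fun _ => γ) := by
  simp only [pow_hitCount]
  exact Integrable.fintype_prod fun _ =>
    (integrable_const 1).sub (((integrable_const (1 : ℝ)).indicator hD).const_mul (1 - a))

lemma integral_pow_hitCount [IsProbabilityMeasure γ] (hD : MeasurableSet D) (a : ℝ) :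
    ∫ ω : ι → Ω, a ^ hitCount D ω ∂(Measure.pi fun _ => γ) =
      (1 - (1 - a) * γ.real D) ^ Fintype.card ι := by
  have hint : Integrable (D.indicator (1 : Ω → ℝ)) γ := (integrable_const (1 : ℝ)).indicator hD
  simp only [pow_hitCount]
  rw [integral_fintype_prod_eq_pow (fun x => 1 - (1 - a) * D.indicator (1 : Ω → ℝ) x),
    integral_sub (integrable_const 1) (hint.const_mul _), integral_const_mul,
    integral_indicator_one hD, integral_const, probReal_univ, one_smul]

end HitCount

section DifferentialPrivacy

lemma exists_hammingDist_le_one_and_le {ι : Type*} [Fintype ι] {β : ι → Type*}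
    [∀ i, DecidableEq (β i)] {x y : ∀ i, β i} {k : ℕ} (h : hammingDist x y ≤ k + 1) :
    ∃ z, hammingDist x z ≤ 1 ∧ hammingDist z y ≤ k := by
  classical
  rcases eq_or_ne x y with rfl | hxy
  · exact ⟨x, by simp only [hammingDist_self, zero_le], by simp only [hammingDist_self, zero_le]⟩
  obtain ⟨i, hi⟩ := Function.ne_iff.1 hxy
  refine ⟨Function.update x i (y i), ?_, ?_⟩
  · have hsub : (Finset.univ.filter fun j => x j ≠ Function.update x i (y i) j) ⊆ {i} := by
      intro j hj
      by_contra hji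
      simp_all
    exact (Finset.card_le_card hsub).trans_eq (Finset.card_singleton i)
  · have hlt : hammingDist (Function.update x i (y i)) y < hammingDist x y := by
      refine Finset.card_lt_card (Finset.ssubset_iff_of_subset ?_ |>.2 ⟨i, ?_, ?_⟩)
      · intro j hj
        rcases eq_or_ne j i with rfl | hji <;> simp_all
      · simpa using hi
      · simp
    lia

variable [DecidableEq 𝓧] {n : ℕ} {M : Kernel (Fin n → 𝓧) 𝓨} {ε δ : ℝ}

lemma IsDP.measureReal_le [IsFiniteKernel M] (hM : IsDP M ε δ) (hδ : 0 ≤ δ) {x y : Fin n → 𝓧}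
    (hxy : hammingDist x y ≤ 1) {S : Set 𝓨} (hS : MeasurableSet S) :
    (M x).real S ≤ exp ε * (M y).real S + δ := by
  have hle := ENNReal.toReal_mono (by finiteness) (hM x y hxy S hS)
  rwa [ENNReal.toReal_add (by finiteness) (by finiteness), ENNReal.toReal_mul,
    ENNReal.toReal_ofReal (exp_pos ε).le, ENNReal.toReal_ofReal hδ] at hle

lemma IsDP.exp_neg_pow_mul_measureReal_le [IsFiniteKernel M] (hM : IsDP M ε δ) (hε : 0 ≤ ε)
    (hδ : 0 ≤ δ) {k : ℕ} {x y : Fin n → 𝓧} (hxy : hammingDist x y ≤ k) {S : Set 𝓨}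
    (hS : MeasurableSet S) :
    exp (-ε) ^ k * (M x).real S ≤ (M y).real S + k * exp (-ε) * δ := by
  induction k generalizing x with
  | zero =>
    obtain rfl : x = y := hammingDist_eq_zero.1 (Nat.le_zero.1 hxy)
    simp only [pow_zero, one_mul, Nat.cast_zero, zero_mul, add_zero, le_refl]
  | succ k ih =>
    obtain ⟨z, hxz, hzy⟩ := exists_hammingDist_le_one_and_le hxy
    have hstep : exp (-ε) * (M x).real S ≤ (M z).real S + exp (-ε) * δ := by
      calc exp (-ε) * (M x).real S ≤ exp (-ε) * (exp ε * (M z).real S + δ) := by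
            gcongr
            exact hM.measureReal_le hδ hxz hS
        _ = (M z).real S + exp (-ε) * δ := by
            rw [mul_add, ← mul_assoc, ← exp_add, neg_add_cancel, exp_zero, one_mul]
    have hpow : exp (-ε) ^ k ≤ 1 :=
      pow_le_one₀ (exp_pos _).le (exp_le_one_iff.2 (neg_nonpos.2 hε))
    calc exp (-ε) ^ (k + 1) * (M x).real S
        = exp (-ε) ^ k * (exp (-ε) * (M x).real S) := by ring
      _ ≤ exp (-ε) ^ k * ((M z).real S + exp (-ε) * δ) := by gcongr
      _ = exp (-ε) ^ k * (M z).real S + exp (-ε) ^ k * (exp (-ε) * δ) := by ring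
      _ ≤ ((M y).real S + k * exp (-ε) * δ) + 1 * (exp (-ε) * δ) := by
          gcongr
          exact ih hzy
      _ = (M y).real S + (k + 1 : ℕ) * exp (-ε) * δ := by
          push_cast
          ring

lemma IsDP.tvDist_le [IsMarkovKernel M] (hM : IsDP M ε δ) (hε : 0 ≤ ε) (hδ : 0 ≤ δ) {k : ℕ}
    {x y : Fin n → 𝓧} (hxy : hammingDist x y ≤ k) :
    tvDist (M x) (M y) ≤ 1 - exp (-ε) ^ k + k * exp (-ε) * δ := by
  refine _root_.tvDist_le fun S hS => ?_
  have hgroup := hM.exp_neg_pow_mul_measureReal_le hε hδ hxy hS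
  have hpow : exp (-ε) ^ k ≤ 1 :=
    pow_le_one₀ (exp_pos _).le (exp_le_one_iff.2 (neg_nonpos.2 hε))
  have hexcess : (1 - exp (-ε) ^ k) * (M x).real S ≤ 1 - exp (-ε) ^ k :=
    mul_le_of_le_one_right (sub_nonneg.2 hpow) measureReal_le_one
  linarith

lemma IsDP.tvDist_comp_le [IsMarkovKernel M] (hM : IsDP M ε δ) (hε : 0 ≤ ε) (hδ : 0 ≤ δ)
    (P Q : Measure (Fin n → 𝓧)) [IsProbabilityMeasure P] [IsProbabilityMeasure Q] :
    tvDist (M ∘ₘ P) (M ∘ₘ Q) ≤ (1 - exp (-ε) ^ n + n * exp (-ε) * δ) * tvDist P Q :=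
  tvDist_comp_le_mul_tvDist M
    (fun _ _ => hM.tvDist_le hε hδ (hammingDist_le_card_fintype.trans_eq (Fintype.card_fin n))) P Q

lemma IsDP.tvDist_comp_pi_le [IsMarkovKernel M] (hM : IsDP M ε δ) (hε : 0 ≤ ε) (hδ : 0 ≤ δ)
    (p q : Measure 𝓧) [IsProbabilityMeasure p] [IsProbabilityMeasure q] :
    tvDist (M ∘ₘ Measure.pi fun _ => p) (M ∘ₘ Measure.pi fun _ => q) ≤
      1 - (1 - (1 - exp (-ε)) * tvDist p q) ^ n + n * exp (-ε) * δ * tvDist p q := by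
  obtain ⟨γ, hγ⟩ := exists_isMaximalCoupling p q
  have : IsProbabilityMeasure γ := isProbabilityMeasure_of_measurePreserving hγ.fst
  have hpow := integrable_pow_hitCount (ι := Fin n) γ hγ.measurableSet (exp (-ε))
  have hlin := (integrable_hitCount (ι := Fin n) γ hγ.measurableSet).mul_const (exp (-ε) * δ)
  have hle := tvDist_comp_le_integral M (measurePreserving_pi _ _ fun _ => hγ.fst)
    (measurePreserving_pi _ _ fun _ => hγ.snd) (((integrable_const 1).sub hpow).add hlin)
    fun ω => (hM.tvDist_le hε hδ (hammingDist_comp_le_hitCount hγ.eq_of_notMem ω)).trans_eq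
      (by simp only [Pi.add_apply, Pi.sub_apply, mul_assoc])
  rw [integral_add' ((integrable_const 1).sub hpow) hlin, integral_sub' (integrable_const 1) hpow,
    integral_mul_const, integral_pow_hitCount γ hγ.measurableSet,
    integral_hitCount γ hγ.measurableSet, integral_const, probReal_univ, one_smul,
    hγ.measureReal_eq, Fintype.card_fin] at hle
  linarith

end DifferentialPrivacy

/-- **Le Cam's lemma for `(ε, δ)`-DP**: if `M` is `(ε, δ)`-DP, then for any binary test `Ψ`
and any probability distributions `P 0, P 1` on `𝓧^n`,
`max_i P_{X ∼ P i, M}(Ψ(M(X)) ≠ i)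
  ≥ (1/2) max { 1 - TV(P 0, P 1), 1 - (1 - e^{-nε} + 2 n e^{-ε} δ) TV(P 0, P 1) }`;
moreover, when `P i = (p i)^{⊗n}` are product distributions,
`max_i P_{X ∼ P i, M}(Ψ(M(X)) ≠ i)
  ≥ (1/2) ((1 - (1 - e^{-ε}) TV(p 0, p 1))^n - 2 n e^{-ε} δ TV(p 0, p 1))`. -/
theorem lecam_dp [DecidableEq 𝓧] {n : ℕ}
    (M : Kernel (Fin n → 𝓧) 𝓨) [IsMarkovKernel M]
    (ε δ : ℝ) (hε : 0 < ε) (hδ0 : 0 ≤ δ) (hδ1 : δ < 1) (hDP : IsDP M ε δ)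
    (Ψ : 𝓨 → Fin 2) (hΨ : Measurable Ψ) :
    (∀ P : Fin 2 → Measure (Fin n → 𝓧), (∀ i, IsProbabilityMeasure (P i)) →
      (1 / 2 : ℝ) * max (1 - tvDist (P 0) (P 1))
          (1 - (1 - Real.exp (-(n * ε)) + 2 * n * Real.exp (-ε) * δ) * tvDist (P 0) (P 1))
      ≤ max ((∫⁻ x, M x {y | Ψ y ≠ 0} ∂(P 0)).toReal)
            ((∫⁻ x, M x {y | Ψ y ≠ 1} ∂(P 1)).toReal)) ∧
    (∀ p : Fin 2 → Measure 𝓧, (∀ i, IsProbabilityMeasure (p i)) →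
      (1 / 2 : ℝ) * ((1 - (1 - Real.exp (-ε)) * tvDist (p 0) (p 1)) ^ n
          - 2 * n * Real.exp (-ε) * δ * tvDist (p 0) (p 1))
      ≤ max ((∫⁻ x, M x {y | Ψ y ≠ 0} ∂(Measure.pi fun _ : Fin n => p 0)).toReal)
            ((∫⁻ x, M x {y | Ψ y ≠ 1} ∂(Measure.pi fun _ : Fin n => p 1)).toReal)) := by
  have herr (P : Fin 2 → Measure (Fin n → 𝓧)) (hP : ∀ i, IsProbabilityMeasure (P i)) :
      (1 / 2 : ℝ) * (1 - tvDist (M ∘ₘ P 0) (M ∘ₘ P 1)) ≤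
        max ((∫⁻ x, M x {y | Ψ y ≠ 0} ∂(P 0)).toReal)
          ((∫⁻ x, M x {y | Ψ y ≠ 1} ∂(P 1)).toReal) := by
    have hlaw (i j : Fin 2) : ∫⁻ x, M x {y | Ψ y ≠ j} ∂(P i) = (M ∘ₘ P i) {y | Ψ y ≠ j} :=
      (Measure.bind_apply (hΨ (.of_discrete (s := {j}ᶜ))) M.aemeasurable).symm
    rw [hlaw, hlaw]
    exact half_one_sub_tvDist_le_max hΨ
  refine ⟨fun P hP => (mul_le_mul_of_nonneg_left (max_le ?_ ?_) (by norm_num)).trans (herr P hP),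
    fun p hp => (mul_le_mul_of_nonneg_left ?_ (by norm_num)).trans
      (herr (fun i => Measure.pi fun _ => p i) inferInstance)⟩
  · linarith [tvDist_comp_le_mul_tvDist M (fun _ _ => tvDist_le_one) (P 0) (P 1)]
  · have hexp : exp (-(n * ε)) = exp (-ε) ^ n := by rw [← exp_nat_mul, mul_neg]
    have hslack : 0 ≤ n * exp (-ε) * δ * tvDist (P 0) (P 1) :=
      mul_nonneg (by positivity) tvDist_nonneg
    rw [hexp]
    linarith [hDP.tvDist_comp_le hε.le hδ0 (P 0) (P 1)]
  · have hslack : 0 ≤ n * exp (-ε) * δ * tvDist (p 0) (p 1) :=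
      mul_nonneg (by positivity) tvDist_nonneg
    linarith [hDP.tvDist_comp_pi_le hε.le hδ0 (p 0) (p 1)]
end

section
/- Fano-type bound for ρ-zCDP: if M : X^n → Y is ρ-zero-concentrated differentially private, then for any test function Ψ : Y → {1,…,N}, any probability distributions P_1,…,P_N on X^n, and any probability distribution Q with P_i ≪ Q for all i, max_{i} P_{X∼P_i,M}(Ψ(M(X)) ≠ i) ≥ max{ 1 − (1 + (1/N) Σ_i KL(P_i‖Q))/ln(N), 1 − (1 + (n²ρ/N²) Σ_{i,j} 2TV(P_i,P_j)/(1+TV(P_i,P_j)))/ln(N) }. Furthermore, when each P_i = p_i^{⊗n} is a product distribution, max_{i} P_{X∼P_i,M}(Ψ(M(X)) ≠ i) ≥ 1 − (1 + (n²ρ/N²) Σ_{i,j} [ (1/n)·2TV(p_i,p_j)/(1+TV(p_i,p_j)) + (2TV(p_i,p_j)/(1+TV(p_i,p_j)))² ])/ln(N). -/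
open MeasureTheory ProbabilityTheory Real
open scoped ENNReal NNReal

variable {𝓧 𝓨 : Type*} [MeasurableSpace 𝓧] [MeasurableSpace 𝓨]

open scoped Classical in
/-- The Renyi divergence of order `a`:
`D_a(P ‖ Q) = (a - 1)⁻¹ log ∫ (dP/dQ)^a dQ`, with value `∞` when `P` is not absolutely
continuous w.r.t. `Q` or the integral is infinite. -/
noncomputable def renyiDiv {α : Type*} [MeasurableSpace α] (a : ℝ) (P Q : Measure α) : ℝ≥0∞ :=
  if P ≪ Q ∧ ∫⁻ x, (P.rnDeriv Q x) ^ a ∂Q ≠ ⊤ then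
    ENNReal.ofReal ((a - 1)⁻¹ * Real.log (∫⁻ x, (P.rnDeriv Q x) ^ a ∂Q).toReal)
  else ⊤

/-- A randomized mechanism `M : 𝓧^n → 𝓨` is `ρ`-zero-concentrated differentially private if
for any two datasets at Hamming distance at most `1` and any order `a ∈ (1, ∞)`,
`D_a(M(x) ‖ M(y)) ≤ ρ a`. -/
def IsZCDP [DecidableEq 𝓧] {n : ℕ} (M : Kernel (Fin n → 𝓧) 𝓨) (ρ : ℝ) : Prop :=
  ∀ x y : Fin n → 𝓧, hammingDist x y ≤ 1 → ∀ a : ℝ, 1 < a →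
    renyiDiv a (M x) (M y) ≤ ENNReal.ofReal (ρ * a)

open scoped Classical in
/-- The Kullback-Leibler divergence `KL(P ‖ Q) = ∫ log (dP/dQ) dP`, with value `∞` when
`P` is not absolutely continuous w.r.t. `Q` or the log-likelihood ratio is not integrable. -/
noncomputable def klDiv' {α : Type*} [MeasurableSpace α] (P Q : Measure α) : ℝ≥0∞ :=
  if P ≪ Q ∧ Integrable (llr P Q) P then ENNReal.ofReal (∫ x, llr P Q x ∂P) else ⊤

/-!
If `klDiv P Q` is finite, the Donsker–Varadhan inequality applied to `s * llr Q R` gives the weak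
triangle inequality `KL(P ‖ R) ≤ (1 + 1/s) KL(P ‖ Q) + D_{1+s}(Q ‖ R)`. Choosing `s = d` at the
`d`-th point of a Hamming path from `x` to `y` turns `ρ d²` into `ρ (d + 1)²`, so a `ρ`-zCDP
mechanism satisfies `KL(M x ‖ M y) ≤ ρ d_H(x, y)²`.

Donsker–Varadhan applied to `log N` times the indicator of `{Ψ = i}` gives
`P(Ψ = i) log N ≤ KL(P ‖ Q) + (N - 1) Q(Ψ = i)`. Fano's inequality follows by averaging over `i`:
the events `{Ψ = i}` partition the space, so the last terms sum to `N - 1`. For the first bound,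
`KL` does not increase when `P i` and `Q` are pushed through `M`. For the others, the inequality is
used for `M x` and `M y` and integrated over a coupling of `P i` and `P j` whose disagreement event
has mass at most `t = TV(P i, P j)`, so that `d_H²` has mean at most `n² t`. For products, couple
each coordinate independently: with `t = TV(p i, p j)`, `d_H` is dominated by a binomial variable,
whose second moment is at most `n t + (n t)²`. Finally `t ≤ 2t / (1 + t)`.
-/

open InformationTheory Set Filter
open scoped Topology

section DonskerVaradhan

variable {α : Type*} [MeasurableSpace α] {P Q : Measure α} {g : α → ℝ}

lemma mul_le_klFun_add_exp_sub_one {x : ℝ} (hx : 0 ≤ x) (y : ℝ) :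
    x * y ≤ klFun x + exp y - 1 := by
  have hxy : exp y * klFun (x * exp (-y)) = klFun x + exp y - 1 - x * y := by
    rcases hx.eq_or_lt with rfl | hx
    · simp [klFun_zero]
    · rw [klFun_apply, klFun_apply, log_mul hx.ne' (exp_pos _).ne', log_exp, exp_neg]
      field_simp
      ring
  have := mul_nonneg (exp_pos y).le (klFun_nonneg (mul_nonneg hx (exp_pos (-y)).le))
  linarith

lemma integrable_max_zero_of_klDiv_ne_top [IsFiniteMeasure P] [IsFiniteMeasure Q]
    (hPQ : klDiv P Q ≠ ∞) (hg : Integrable (fun x ↦ exp (g x)) Q) :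
    Integrable (fun x ↦ max (g x) 0) P := by
  obtain ⟨hac, hllr⟩ := klDiv_ne_top_iff.1 hPQ
  have hgm : AEMeasurable g Q := aemeasurable_of_aemeasurable_exp hg.aemeasurable
  rw [← integrable_rnDeriv_smul_iff hac]
  refine (((integrable_klFun_rnDeriv_iff hac).2 hllr).add hg).mono'
    ((Measure.measurable_rnDeriv P Q).ennreal_toReal.aemeasurable.smul
      (hgm.max aemeasurable_const)).aestronglyMeasurable (.of_forall fun x ↦ ?_)
  have hf : 0 ≤ (P.rnDeriv Q x).toReal := ENNReal.toReal_nonneg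
  have hyoung := mul_le_klFun_add_exp_sub_one hf (g x)
  rw [norm_of_nonneg (smul_nonneg hf (le_max_right _ _)), smul_eq_mul, Pi.add_apply]
  rcases le_total (g x) 0 with h | h
  · rw [max_eq_right h, mul_zero]
    exact add_nonneg (klFun_nonneg hf) (exp_pos _).le
  · rw [max_eq_left h]
    linarith

/-- One half of the **Donsker–Varadhan variational formula**. -/
lemma integral_le_toReal_klDiv_add_log_integral_exp [IsProbabilityMeasure P]
    [IsProbabilityMeasure Q] (hPQ : klDiv P Q ≠ ∞) (hgP : Integrable g P)
    (hgQ : Integrable (fun x ↦ exp (g x)) Q) :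
    ∫ x, g x ∂P ≤ (klDiv P Q).toReal + log (∫ x, exp (g x) ∂Q) := by
  obtain ⟨hac, hllr⟩ := klDiv_ne_top_iff.1 hPQ
  have := isProbabilityMeasure_tilted hgQ
  have gibbs := integral_llr_add_sub_measure_univ_nonneg
    (hac.trans (absolutelyContinuous_tilted hgQ)) (integrable_llr_tilted_right hac hgP hllr hgQ)
  rw [integral_llr_tilted_right hac hgP hgQ hllr] at gibbs
  rw [toReal_klDiv_of_measure_eq hac (by simp)]
  simp only [probReal_univ] at gibbs
  linarith

end DonskerVaradhan

section Renyi

variable {α : Type*} [MeasurableSpace α] {P Q R : Measure α} {a s : ℝ}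

lemma absolutelyContinuous_of_renyiDiv_ne_top (h : renyiDiv a P Q ≠ ∞) : P ≪ Q := by
  by_contra hPQ
  exact h (if_neg fun h' ↦ hPQ h'.1)

lemma lintegral_exp_mul_llr [IsFiniteMeasure P] [IsFiniteMeasure Q] (hPQ : P ≪ Q) (hs : 0 ≤ s) :
    ∫⁻ x, ENNReal.ofReal (exp (s * llr P Q x)) ∂P = ∫⁻ x, P.rnDeriv Q x ^ (1 + s) ∂Q := by
  have hexp : (fun x ↦ ENNReal.ofReal (exp (s * llr P Q x))) =ᵐ[P] fun x ↦ P.rnDeriv Q x ^ s := by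
    filter_upwards [exp_llr_of_ac P Q hPQ, hPQ.ae_le (P.rnDeriv_ne_top Q)] with x hx hx_top
    rw [mul_comm, exp_mul, hx, ← ENNReal.ofReal_rpow_of_nonneg ENNReal.toReal_nonneg hs,
      ENNReal.ofReal_toReal hx_top]
  rw [lintegral_congr_ae hexp, ← lintegral_rnDeriv_mul hPQ (by fun_prop)]
  refine lintegral_congr fun x ↦ ?_
  rw [ENNReal.rpow_add_of_nonneg _ _ zero_le_one hs, ENNReal.rpow_one]

lemma integrable_exp_mul_llr [IsFiniteMeasure P] [IsFiniteMeasure Q] (hs : 0 ≤ s)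
    (h : renyiDiv (1 + s) P Q ≠ ∞) : Integrable (fun x ↦ exp (s * llr P Q x)) P := by
  have hac := absolutelyContinuous_of_renyiDiv_ne_top h
  refine ⟨by fun_prop, ?_⟩
  rw [hasFiniteIntegral_iff_ofReal (.of_forall fun x ↦ (exp_pos _).le),
    lintegral_exp_mul_llr hac hs, lt_top_iff_ne_top]
  intro htop
  exact h (if_neg fun h' ↦ h'.2 htop)

lemma log_integral_exp_mul_llr_le [IsFiniteMeasure P] [IsFiniteMeasure Q] (hs : 0 < s)
    (h : renyiDiv (1 + s) P Q ≠ ∞) :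
    log (∫ x, exp (s * llr P Q x) ∂P) ≤ s * (renyiDiv (1 + s) P Q).toReal := by
  have hac := absolutelyContinuous_of_renyiDiv_ne_top h
  have hfin : P ≪ Q ∧ ∫⁻ x, P.rnDeriv Q x ^ (1 + s) ∂Q ≠ ∞ := by
    by_contra h'
    exact h (if_neg h')
  rw [integral_eq_lintegral_of_nonneg_ae (.of_forall fun x ↦ (exp_pos _).le) (by fun_prop),
    lintegral_exp_mul_llr hac hs.le, renyiDiv, if_pos hfin, ENNReal.toReal_ofReal',
    add_sub_cancel_left]
  have := mul_le_mul_of_nonneg_left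
    (le_max_left (s⁻¹ * log (∫⁻ x, P.rnDeriv Q x ^ (1 + s) ∂Q).toReal) 0) hs.le
  rwa [mul_inv_cancel_left₀ hs.ne'] at this

lemma llr_add_llr_ae_eq [SigmaFinite P] [SigmaFinite Q] [SigmaFinite R] (hPQ : P ≪ Q)
    (hQR : Q ≪ R) : (fun x ↦ llr P Q x + llr Q R x) =ᵐ[P] llr P R := by
  have hPR := hPQ.trans hQR
  filter_upwards [hPR.ae_le (Measure.rnDeriv_mul_rnDeriv hPQ (κ := R)), Measure.rnDeriv_pos hPQ,
    hPQ.ae_le (P.rnDeriv_ne_top Q), hPQ.ae_le (Measure.rnDeriv_pos hQR),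
    hPR.ae_le (Q.rnDeriv_ne_top R)] with x hx hPQ_pos hPQ_top hQR_pos hQR_top
  rw [llr_def, llr_def, llr_def, ← log_mul (ENNReal.toReal_pos hPQ_pos.ne' hPQ_top).ne'
    (ENNReal.toReal_pos hQR_pos.ne' hQR_top).ne',
    ← ENNReal.toReal_mul, ← Pi.mul_apply, hx]

lemma integrable_llr_of_renyiDiv_ne_top [IsFiniteMeasure P] [IsFiniteMeasure Q] [IsFiniteMeasure R]
    (hs : 0 < s) (hPQ : klDiv P Q ≠ ∞) (hQR : renyiDiv (1 + s) Q R ≠ ∞) :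
    Integrable (llr Q R) P := by
  have hpos := (integrable_max_zero_of_klDiv_ne_top hPQ
    (integrable_exp_mul_llr hs.le hQR)).const_mul s⁻¹
  have hneg : Integrable (fun x ↦ max (-llr Q R x) 0) P := by
    have hac := absolutelyContinuous_of_renyiDiv_ne_top hQR
    exact integrable_max_zero_of_klDiv_ne_top hPQ
      (Measure.integrable_toReal_rnDeriv.congr (exp_neg_llr hac).symm)
  refine (hpos.sub hneg).congr (.of_forall fun x ↦ ?_)
  simp only [Pi.sub_apply]
  rcases le_total (llr Q R x) 0 with h | h
  · rw [max_eq_right (mul_nonpos_of_nonneg_of_nonpos hs.le h), max_eq_left (neg_nonneg.2 h)]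
    ring
  · rw [max_eq_left (mul_nonneg hs.le h), max_eq_right (neg_nonpos.2 h),
      inv_mul_cancel_left₀ hs.ne', sub_zero]

lemma klDiv_le_klDiv_add_renyiDiv [IsProbabilityMeasure P] [IsProbabilityMeasure Q]
    [IsProbabilityMeasure R] (hs : 0 < s) :
    klDiv P R ≤ ENNReal.ofReal (1 + s⁻¹) * klDiv P Q + renyiDiv (1 + s) Q R := by
  have hs' : 0 < 1 + s⁻¹ := by positivity
  by_cases hPQ : klDiv P Q = ∞
  · simp [hPQ, ENNReal.mul_top (ENNReal.ofReal_pos.2 hs').ne']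
  by_cases hQR : renyiDiv (1 + s) Q R = ∞
  · simp [hQR]
  obtain ⟨hacPQ, hllrPQ⟩ := klDiv_ne_top_iff.1 hPQ
  have hacQR := absolutelyContinuous_of_renyiDiv_ne_top hQR
  have hllrQR : Integrable (llr Q R) P := integrable_llr_of_renyiDiv_ne_top hs hPQ hQR
  have hchain := llr_add_llr_ae_eq hacPQ hacQR
  have hPR : klDiv P R ≠ ∞ := klDiv_ne_top (hacPQ.trans hacQR) ((hllrPQ.add hllrQR).congr hchain)
  have hsplit : (klDiv P R).toReal = (klDiv P Q).toReal + ∫ x, llr Q R x ∂P := by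
    rw [toReal_klDiv_of_measure_eq (hacPQ.trans hacQR) (by simp),
      toReal_klDiv_of_measure_eq hacPQ (by simp), ← integral_congr_ae hchain,
      integral_add hllrPQ hllrQR]
  have hDV : s * ∫ x, llr Q R x ∂P
      ≤ (klDiv P Q).toReal + s * (renyiDiv (1 + s) Q R).toReal := by
    rw [← integral_const_mul]
    exact (integral_le_toReal_klDiv_add_log_integral_exp hPQ (hllrQR.const_mul s)
      (integrable_exp_mul_llr hs.le hQR)).trans
        (by gcongr; exact log_integral_exp_mul_llr_le hs hQR)
  have hreal : (klDiv P R).toReal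
      ≤ (1 + s⁻¹) * (klDiv P Q).toReal + (renyiDiv (1 + s) Q R).toReal := by
    have := mul_le_mul_of_nonneg_left hDV (inv_pos.2 hs).le
    rw [mul_add, inv_mul_cancel_left₀ hs.ne', inv_mul_cancel_left₀ hs.ne'] at this
    rw [hsplit]
    linarith
  rw [← ENNReal.ofReal_toReal hPR]
  refine (ENNReal.ofReal_le_ofReal hreal).trans_eq ?_
  rw [ENNReal.ofReal_add (by positivity) ENNReal.toReal_nonneg, ENNReal.ofReal_mul hs'.le,
    ENNReal.ofReal_toReal hPQ, ENNReal.ofReal_toReal hQR]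

end Renyi

section GroupPrivacy

lemma exists_hammingDist_eq_of_hammingDist_eq_add_one {ι : Type*} [Fintype ι] {β : ι → Type*}
    [∀ i, DecidableEq (β i)] {x y : ∀ i, β i} {d : ℕ} (h : hammingDist x y = d + 1) :
    ∃ z, hammingDist x z = d ∧ hammingDist z y ≤ 1 := by
  classical
  obtain ⟨i, hi⟩ : ∃ i, x i ≠ y i := Function.ne_iff.1 (hammingDist_ne_zero.1 (by omega))
  refine ⟨Function.update y i (x i), ?_, ?_⟩
  · have herase : ({j | x j ≠ Function.update y i (x i) j} : Finset ι)
        = ({j | x j ≠ y j} : Finset ι).erase i := by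
      ext j
      rcases eq_or_ne j i with rfl | hj <;> simp [*]
    rw [hammingDist, herase, Finset.card_erase_of_mem (by simpa using hi)]
    exact Nat.sub_eq_of_eq_add h
  · refine (Finset.card_le_card (t := {i}) fun j hj ↦ ?_).trans (Finset.card_singleton i).le
    by_contra hji
    simp_all

-- The order `1 + s` with `s = d` is optimal; `ε` keeps it above `1` when `d = 0`.
lemma klDiv_le_mul_add_one_sq {α : Type*} [MeasurableSpace α] {P Q R : Measure α}
    [IsProbabilityMeasure P] [IsProbabilityMeasure Q] [IsProbabilityMeasure R] {ρ d : ℝ}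
    (hd : 0 ≤ d) (hPQ : klDiv P Q ≤ ENNReal.ofReal ρ * ENNReal.ofReal (d ^ 2))
    (hQR : ∀ a, 1 < a → renyiDiv a Q R ≤ ENNReal.ofReal (ρ * a)) :
    klDiv P R ≤ ENNReal.ofReal ρ * ENNReal.ofReal ((d + 1) ^ 2) := by
  have hstep (ε : ℝ) (hε : 0 < ε) :
      klDiv P R ≤ ENNReal.ofReal ρ * ENNReal.ofReal ((d + 1) ^ 2 + ε) := by
    have hs : 0 < d + ε := by positivity
    have hcoeff : (1 + (d + ε)⁻¹) * d ^ 2 + (1 + (d + ε)) ≤ (d + 1) ^ 2 + ε := by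
      have : (d + ε)⁻¹ * d ^ 2 ≤ d := by
        rw [inv_mul_le_iff₀ hs]
        nlinarith
      linarith
    calc klDiv P R
      _ ≤ ENNReal.ofReal (1 + (d + ε)⁻¹) * klDiv P Q + renyiDiv (1 + (d + ε)) Q R :=
        klDiv_le_klDiv_add_renyiDiv hs
      _ ≤ ENNReal.ofReal (1 + (d + ε)⁻¹) * (ENNReal.ofReal ρ * ENNReal.ofReal (d ^ 2))
          + ENNReal.ofReal (ρ * (1 + (d + ε))) := by
        gcongr
        exact hQR _ (by linarith)
      _ = ENNReal.ofReal ρ * ENNReal.ofReal ((1 + (d + ε)⁻¹) * d ^ 2 + (1 + (d + ε))) := by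
        rw [ENNReal.ofReal_mul' (by positivity : 0 ≤ 1 + (d + ε)),
          ENNReal.ofReal_add (p := _ * _) (by positivity) (by positivity),
          ENNReal.ofReal_mul (q := d ^ 2) (by positivity)]
        ring
      _ ≤ ENNReal.ofReal ρ * ENNReal.ofReal ((d + 1) ^ 2 + ε) := by gcongr
  have hlim : Tendsto
      (fun ε : ℝ ↦ ENNReal.ofReal ρ * ENNReal.ofReal ((d + 1) ^ 2 + ε))
      (𝓝[>] 0) (𝓝 (ENNReal.ofReal ρ * ENNReal.ofReal ((d + 1) ^ 2))) := by
    refine ENNReal.Tendsto.const_mul (ENNReal.tendsto_ofReal ?_) (Or.inr ENNReal.ofReal_ne_top)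
    exact ((continuous_const.add continuous_id).tendsto' 0 _ (add_zero _)).mono_left
      nhdsWithin_le_nhds
  exact ge_of_tendsto hlim (eventually_mem_nhdsWithin.mono hstep)

variable [DecidableEq 𝓧] {n : ℕ} {M : Kernel (Fin n → 𝓧) 𝓨} [IsMarkovKernel M] {ρ : ℝ}

lemma IsZCDP.klDiv_le (hM : IsZCDP M ρ) (x y : Fin n → 𝓧) :
    klDiv (M x) (M y) ≤ ENNReal.ofReal ρ * ENNReal.ofReal ((hammingDist x y : ℝ) ^ 2) := by
  induction hd : hammingDist x y generalizing y with
  | zero => simp [hammingDist_eq_zero.1 hd]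
  | succ d ih =>
    obtain ⟨z, hxz, hzy⟩ := exists_hammingDist_eq_of_hammingDist_eq_add_one hd
    rw [Nat.cast_add_one]
    exact klDiv_le_mul_add_one_sq d.cast_nonneg (ih z hxz) (hM z y hzy)

lemma IsZCDP.toReal_klDiv_le (hM : IsZCDP M ρ) (hρ : 0 ≤ ρ) (x y : Fin n → 𝓧) :
    (klDiv (M x) (M y)).toReal ≤ ρ * (hammingDist x y : ℝ) ^ 2 := by
  refine ENNReal.toReal_le_of_le_ofReal (by positivity) ?_
  rw [ENNReal.ofReal_mul hρ]
  exact hM.klDiv_le x y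

end GroupPrivacy

section Fano

lemma measureReal_mul_log_le {α : Type*} [MeasurableSpace α] {P Q : Measure α}
    [IsProbabilityMeasure P] [IsProbabilityMeasure Q] (hPQ : klDiv P Q ≠ ∞) {S : Set α}
    (hS : MeasurableSet S) {c : ℝ} (hc : 0 < c) :
    P.real S * log c ≤ (klDiv P Q).toReal + (c - 1) * Q.real S := by
  have hexp : (fun x ↦ exp (S.indicator (fun _ ↦ log c) x))
      = fun x ↦ 1 + S.indicator (fun _ ↦ c - 1) x := by
    ext x
    by_cases hx : x ∈ S <;> simp [hx, exp_log hc]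
  have hind : Integrable (S.indicator fun _ ↦ c - 1) Q := (integrable_const _).indicator hS
  have hDV := integral_le_toReal_klDiv_add_log_integral_exp hPQ
    ((integrable_const (log c)).indicator hS) (hexp ▸ (integrable_const 1).add hind)
  have hmass : ∫ x, exp (S.indicator (fun _ ↦ log c) x) ∂Q = 1 + (c - 1) * Q.real S := by
    rw [hexp, integral_add (integrable_const 1) hind, integral_indicator_const _ hS]
    simp [mul_comm]
  have hmass_pos : 0 < 1 + (c - 1) * Q.real S := by
    rw [← hmass]
    exact integral_exp_pos (hexp ▸ (integrable_const 1).add hind)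
  rw [hmass, integral_indicator_const _ hS, smul_eq_mul] at hDV
  linarith [log_le_sub_one_of_pos hmass_pos]

variable {ι : Type*}

/-- The worst-case probability, over the hypotheses `i`, that the test `Ψ` misses `i` when the
observation has law `ν i`. -/
noncomputable def maxError (ν : ι → Measure 𝓨) (Ψ : 𝓨 → ι) : ℝ :=
  ⨆ i, (ν i).real {y | Ψ y ≠ i}

variable [MeasurableSpace ι] [MeasurableSingletonClass ι] {ν : ι → Measure 𝓨}
  [∀ i, IsProbabilityMeasure (ν i)] {Ψ : 𝓨 → ι}

lemma one_sub_maxError_le [Finite ι] (hΨ : Measurable Ψ) (i : ι) :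
    1 - maxError ν Ψ ≤ (ν i).real (Ψ ⁻¹' {i}) := by
  have herr : (ν i).real {y | Ψ y ≠ i} ≤ maxError ν Ψ :=
    le_ciSup (f := fun i ↦ (ν i).real {y | Ψ y ≠ i}) (Set.finite_range _).bddAbove i
  have hcompl : {y | Ψ y ≠ i} = (Ψ ⁻¹' {i})ᶜ := rfl
  rw [hcompl, probReal_compl_eq_one_sub (hΨ (measurableSet_singleton i))] at herr
  linarith

variable [Fintype ι] [Nonempty ι]

lemma one_sub_maxError_mul_log_card_le (hΨ : Measurable Ψ) (η : Measure 𝓨)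
    [IsProbabilityMeasure η] {K : ι → ℝ}
    (hK : ∀ i, (ν i).real (Ψ ⁻¹' {i}) * log (Fintype.card ι)
      ≤ K i + (Fintype.card ι - 1) * η.real (Ψ ⁻¹' {i})) :
    (1 - maxError ν Ψ) * log (Fintype.card ι) ≤ 1 + (Fintype.card ι : ℝ)⁻¹ * ∑ i, K i := by
  have hcard : 0 < (Fintype.card ι : ℝ) := by exact_mod_cast Fintype.card_pos
  have hcells : ∑ i, η.real (Ψ ⁻¹' {i}) = 1 := by
    rw [sum_measureReal_preimage_singleton _ fun i _ ↦ hΨ (measurableSet_singleton i)]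
    simp
  have hsum := Finset.card_nsmul_le_sum Finset.univ _ _ fun i _ ↦ (mul_le_mul_of_nonneg_right
    (one_sub_maxError_le (ν := ν) hΨ i) (log_natCast_nonneg _)).trans (hK i)
  rw [Finset.sum_add_distrib, ← Finset.mul_sum, hcells, Finset.card_univ, nsmul_eq_mul,
    mul_one] at hsum
  refine le_of_mul_le_mul_left ?_ hcard
  rw [mul_add, mul_inv_cancel_left₀ hcard.ne']
  linarith

lemma one_sub_maxError_mul_log_card_le_of_pairwise (hΨ : Measurable Ψ) {K : ι → ι → ℝ}
    (hK : ∀ i j, (ν i).real (Ψ ⁻¹' {i}) * log (Fintype.card ι)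
      ≤ K i j + (Fintype.card ι - 1) * (ν j).real (Ψ ⁻¹' {i})) :
    (1 - maxError ν Ψ) * log (Fintype.card ι)
      ≤ 1 + ((Fintype.card ι : ℝ) ^ 2)⁻¹ * ∑ i, ∑ j, K i j := by
  have hcard : 0 < (Fintype.card ι : ℝ) := by exact_mod_cast Fintype.card_pos
  have hsum := Finset.card_nsmul_le_sum Finset.univ _ _ fun j _ ↦
    one_sub_maxError_mul_log_card_le hΨ (ν j) fun i ↦ hK i j
  rw [Finset.sum_add_distrib, ← Finset.mul_sum, Finset.sum_comm, Finset.sum_const,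
    Finset.card_univ, nsmul_eq_mul, nsmul_eq_mul, mul_one] at hsum
  refine le_of_mul_le_mul_left (hsum.trans_eq ?_) hcard
  field_simp

end Fano

section TotalVariation

variable {α : Type*} [MeasurableSpace α] {P Q : Measure α}

lemma measureReal_sub_measureReal_le_tvDist [IsFiniteMeasure P] {S : Set α}
    (hS : MeasurableSet S) : P.real S - Q.real S ≤ tvDist P Q := by
  refine le_ciSup (f := fun S : {S : Set α // MeasurableSet S} ↦ P.real S.1 - Q.real S.1)
    ⟨P.real univ, ?_⟩ ⟨S, hS⟩
  rintro _ ⟨T, rfl⟩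
  exact (sub_le_self _ measureReal_nonneg).trans (measureReal_mono (subset_univ _))

lemma tvDist_nonneg_s15 [IsFiniteMeasure P] : 0 ≤ tvDist P Q := by
  simpa using measureReal_sub_measureReal_le_tvDist (P := P) (Q := Q) MeasurableSet.empty

lemma tvDist_le_one_s15 [IsProbabilityMeasure P] : tvDist P Q ≤ 1 := by
  have : Nonempty {S : Set α // MeasurableSet S} := ⟨⟨∅, .empty⟩⟩
  exact ciSup_le fun S ↦ (sub_le_self _ measureReal_nonneg).trans measureReal_le_one

lemma tvDist_le_two_mul_div [IsProbabilityMeasure P] :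
    tvDist P Q ≤ 2 * tvDist P Q / (1 + tvDist P Q) := by
  have h0 : 0 ≤ tvDist P Q := tvDist_nonneg_s15
  rw [le_div_iff₀ (by linarith)]
  nlinarith [tvDist_le_one_s15 (P := P) (Q := Q)]

lemma exists_le_le_measureReal_sub_le_tvDist [IsFiniteMeasure P] [IsFiniteMeasure Q] :
    ∃ C ≤ P, C ≤ Q ∧ P.real univ - C.real univ ≤ tvDist P Q := by
  obtain ⟨S, hS, hPQ, hQP⟩ := exists_isHahnDecomposition P Q
  refine ⟨P.restrict S + Q.restrict Sᶜ, ?_, ?_, ?_⟩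
  · grw [hQP, Measure.restrict_add_restrict_compl hS]
  · grw [hPQ, Measure.restrict_add_restrict_compl hS]
  · have := measureReal_sub_measureReal_le_tvDist (P := P) (Q := Q) hS.compl
    rw [measureReal_add_apply, measureReal_restrict_apply .univ, measureReal_restrict_apply .univ,
      univ_inter, univ_inter, ← measureReal_add_measureReal_compl (μ := P) hS]
    linarith

end TotalVariation

section Coupling

/-- A coupling of `P` and `Q`: random variables `X` and `Y` on a common space, with laws `P` and
`Q`, which agree off the event `D`. The event is part of the data because `{X ≠ Y}` need not be
measurable. -/
structure IsCoupling {Ω α : Type*} [MeasurableSpace Ω] [MeasurableSpace α] (μ : Measure Ω)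
    (X Y : Ω → α) (D : Set Ω) (P Q : Measure α) : Prop where
  measurePreserving_left : MeasurePreserving X μ P
  measurePreserving_right : MeasurePreserving Y μ Q
  measurableSet : MeasurableSet D
  eqOn_compl : EqOn X Y Dᶜ

variable {α : Type*} [MeasurableSpace α] {P Q : Measure α}

/-- The measure on `α ⊕ α × α` that draws a common value from `C` and a pair from the
normalised product of `A` and `B`. -/
noncomputable def gluedMeasure (C A B : Measure α) : Measure (α ⊕ α × α) :=
  C.map Sum.inl + (A univ)⁻¹ • (A.prod B).map Sum.inr

lemma gluedMeasure_range_inr {C A B : Measure α} [IsFiniteMeasure A] [SFinite B]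
    (hAB : A univ = B univ) : gluedMeasure C A B (range Sum.inr) = A univ := by
  rw [gluedMeasure, Measure.add_apply, Measure.smul_apply,
    Measure.map_apply measurable_inl measurableSet_range_inr,
    Measure.map_apply measurable_inr measurableSet_range_inr, preimage_inl_range_inr,
    preimage_range, ← univ_prod_univ, Measure.prod_prod, ← hAB, measure_empty, zero_add,
    smul_eq_mul, ← mul_assoc]
  rcases eq_or_ne (A univ) 0 with h | h
  · simp [h]
  · rw [ENNReal.inv_mul_cancel h (measure_ne_top _ _), one_mul]

lemma inv_measure_univ_smul_smul {A B : Measure α} [IsFiniteMeasure A] (hAB : A univ = B univ) :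
    (A univ)⁻¹ • A univ • B = B := by
  rcases eq_or_ne (A univ) 0 with h | h
  · have : B = 0 := Measure.measure_univ_eq_zero.1 (hAB ▸ h)
    simp [this]
  · rw [smul_smul, ENNReal.inv_mul_cancel h (measure_ne_top _ _), one_smul]

lemma isCoupling_gluedMeasure {C A B : Measure α} [IsFiniteMeasure A] [SFinite B]
    (hAB : A univ = B univ) :
    IsCoupling (gluedMeasure C A B) (Sum.elim id Prod.fst) (Sum.elim id Prod.snd)
      (range Sum.inr) (C + A) (C + B) where
  measurePreserving_left := by
    have hmeas : Measurable (Sum.elim id Prod.fst : α ⊕ α × α → α) :=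
      measurable_id.sumElim measurable_fst
    refine ⟨hmeas, ?_⟩
    rw [gluedMeasure, Measure.map_add _ _ hmeas, Measure.map_smul,
      Measure.map_map hmeas measurable_inl, Measure.map_map hmeas measurable_inr, Sum.elim_comp_inl,
      Sum.elim_comp_inr, Measure.map_id, Measure.map_fst_prod, ← hAB,
      inv_measure_univ_smul_smul rfl]
  measurePreserving_right := by
    have hmeas : Measurable (Sum.elim id Prod.snd : α ⊕ α × α → α) :=
      measurable_id.sumElim measurable_snd
    refine ⟨hmeas, ?_⟩
    rw [gluedMeasure, Measure.map_add _ _ hmeas, Measure.map_smul,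
      Measure.map_map hmeas measurable_inl, Measure.map_map hmeas measurable_inr, Sum.elim_comp_inl,
      Sum.elim_comp_inr, Measure.map_id, Measure.map_snd_prod, inv_measure_univ_smul_smul hAB]
  measurableSet := measurableSet_range_inr
  eqOn_compl := by
    rintro (x | z) hz
    · rfl
    · exact absurd (mem_range_self z) hz

lemma exists_isCoupling_measureReal_le_tvDist [IsFiniteMeasure P] [IsFiniteMeasure Q]
    (hPQ : P univ = Q univ) :
    ∃ (μ : Measure (α ⊕ α × α)) (X Y : α ⊕ α × α → α) (D : Set (α ⊕ α × α)),
      IsCoupling μ X Y D P Q ∧ μ.real D ≤ tvDist P Q := by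
  obtain ⟨C, hCP, hCQ, hC⟩ := exists_le_le_measureReal_sub_le_tvDist (P := P) (Q := Q)
  have := isFiniteMeasure_of_le P hCP
  have := isFiniteMeasure_of_le P (Measure.sub_le (μ := P) (ν := C))
  have := isFiniteMeasure_of_le Q (Measure.sub_le (μ := Q) (ν := C))
  have hP : C + (P - C) = P := by rw [add_comm, Measure.sub_add_cancel_of_le hCP]
  have hQ : C + (Q - C) = Q := by rw [add_comm, Measure.sub_add_cancel_of_le hCQ]
  have hmass : (P - C) univ = (Q - C) univ := by
    rw [Measure.sub_apply .univ hCP, Measure.sub_apply .univ hCQ, hPQ]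
  have hcoupling := isCoupling_gluedMeasure (C := C) hmass
  rw [hP, hQ] at hcoupling
  refine ⟨_, _, _, _, hcoupling, ?_⟩
  rw [measureReal_def, gluedMeasure_range_inr hmass, ← measureReal_def]
  have : C.real univ + (P - C).real univ = P.real univ := by
    rw [← measureReal_add_apply, hP]
  linarith

variable {Ω : Type*} [MeasurableSpace Ω] {μ : Measure Ω} {D : Set Ω}

lemma IsCoupling.isProbabilityMeasure [IsProbabilityMeasure P] {X Y : Ω → α}
    (h : IsCoupling μ X Y D P Q) : IsProbabilityMeasure μ := by
  have : IsProbabilityMeasure (μ.map X) := by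
    rwa [h.measurePreserving_left.map_eq]
  exact Measure.isProbabilityMeasure_of_map X

lemma IsCoupling.sq_hammingDist_le_indicator {ι β : Type*} [Fintype ι] [MeasurableSpace β]
    [DecidableEq β] {P Q : Measure (ι → β)} {X Y : Ω → ι → β} (h : IsCoupling μ X Y D P Q)
    (w : Ω) :
    (hammingDist (X w) (Y w) : ℝ) ^ 2 ≤ D.indicator (fun _ ↦ (Fintype.card ι : ℝ) ^ 2) w := by
  by_cases hw : w ∈ D
  · rw [indicator_of_mem hw]
    gcongr
    exact hammingDist_le_card_fintype
  · simp [hw, h.eqOn_compl hw]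

lemma IsCoupling.hammingDist_le_sum_indicator [DecidableEq α] {ι : Type*} [Fintype ι]
    {X Y : Ω → α} (h : IsCoupling μ X Y D P Q) (w : ι → Ω) :
    (hammingDist (fun i ↦ X (w i)) fun i ↦ Y (w i) : ℝ) ≤ ∑ i, D.indicator 1 (w i) := by
  rw [hammingDist, Finset.card_filter, Nat.cast_sum]
  refine Finset.sum_le_sum fun i _ ↦ ?_
  by_cases hw : w i ∈ D
  · rw [indicator_of_mem hw, Pi.one_apply]
    split_ifs <;> simp
  · simp [hw, h.eqOn_compl hw]

section Independent

variable {ι : Type*} [Fintype ι] [IsProbabilityMeasure μ]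

lemma memLp_indicator_one_comp_eval (hD : MeasurableSet D) (i : ι) :
    MemLp (fun w : ι → Ω ↦ D.indicator (1 : Ω → ℝ) (w i)) 2 (Measure.pi fun _ ↦ μ) :=
  (memLp_indicator_const 2 hD 1 (by simp)).comp_measurePreserving
    (measurePreserving_eval (fun _ ↦ μ) i)

lemma integrable_sum_indicator_one_sq (hD : MeasurableSet D) :
    Integrable (fun w : ι → Ω ↦ (∑ i, D.indicator (1 : Ω → ℝ) (w i)) ^ 2)
      (Measure.pi fun _ ↦ μ) :=
  (memLp_finsetSum _ fun i _ ↦ memLp_indicator_one_comp_eval hD i).integrable_sq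

lemma integral_sum_indicator_one (hD : MeasurableSet D) :
    ∫ w : ι → Ω, ∑ i, D.indicator (1 : Ω → ℝ) (w i) ∂Measure.pi (fun _ ↦ μ)
      = Fintype.card ι * μ.real D := by
  have heval (i : ι) : ∫ w : ι → Ω, D.indicator (1 : Ω → ℝ) (w i) ∂Measure.pi (fun _ ↦ μ)
      = μ.real D := by
    rw [integral_comp_eval (μ := fun _ : ι ↦ μ)
      (stronglyMeasurable_one.indicator hD).aestronglyMeasurable, integral_indicator_one hD]
  rw [integral_finsetSum _ fun i _ ↦ (memLp_indicator_one_comp_eval hD i).integrable one_le_two]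
  simp [heval]

lemma variance_indicator_one_le (hD : MeasurableSet D) :
    Var[D.indicator 1; μ] ≤ μ.real D := by
  refine (variance_le_expectation_sq
    (stronglyMeasurable_one.indicator hD).aestronglyMeasurable).trans_eq ?_
  rw [← integral_indicator_one hD]
  congr 1 with w
  by_cases hw : w ∈ D <;> simp [hw]

lemma integral_sum_indicator_one_sq_le (hD : MeasurableSet D) :
    ∫ w : ι → Ω, (∑ i, D.indicator (1 : Ω → ℝ) (w i)) ^ 2 ∂Measure.pi (fun _ ↦ μ)
      ≤ Fintype.card ι * μ.real D + (Fintype.card ι * μ.real D) ^ 2 := by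
  have hvar : Var[fun w : ι → Ω ↦ ∑ i, D.indicator 1 (w i); Measure.pi fun _ ↦ μ]
      ≤ Fintype.card ι * μ.real D := by
    have hL2 : MemLp (D.indicator (1 : Ω → ℝ)) 2 μ := memLp_indicator_const 2 hD 1 (by simp)
    rw [← Finset.sum_fn, variance_sum_pi fun _ ↦ hL2, Finset.sum_const, Finset.card_univ,
      nsmul_eq_mul]
    gcongr
    exact variance_indicator_one_le hD
  rw [variance_eq_sub (memLp_finsetSum _ fun i _ ↦ memLp_indicator_one_comp_eval hD i),
    integral_sum_indicator_one hD] at hvar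
  simp only [Pi.pow_apply] at hvar
  linarith

end Independent

end Coupling

section Mechanism

variable {ι : Type*}

lemma iSup_toReal_lintegral_eq_maxError [MeasurableSpace ι]
    [MeasurableSingletonClass ι] (M : Kernel 𝓧 𝓨) {Ψ : 𝓨 → ι} (hΨ : Measurable Ψ)
    (P : ι → Measure 𝓧) :
    ⨆ i, (∫⁻ x, M x {y | Ψ y ≠ i} ∂P i).toReal = maxError (fun i ↦ M ∘ₘ P i) Ψ := by
  refine iSup_congr fun i ↦ ?_
  have hS : MeasurableSet {y | Ψ y ≠ i} := hΨ (measurableSet_singleton i).compl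
  rw [measureReal_def, Measure.bind_apply hS M.aemeasurable]

lemma klDiv'_eq_klDiv {α : Type*} [MeasurableSpace α] (P Q : Measure α) [IsProbabilityMeasure P]
    [IsProbabilityMeasure Q] : klDiv' P Q = klDiv P Q := by
  simp [klDiv', klDiv]

lemma ofReal_one_sub_maxError_mul_log_card_le [Fintype ι] [Nonempty ι] [MeasurableSpace ι]
    [MeasurableSingletonClass ι] {ν : ι → Measure 𝓨} [∀ i, IsProbabilityMeasure (ν i)]
    {Ψ : 𝓨 → ι} (hΨ : Measurable Ψ) (η : Measure 𝓨) [IsProbabilityMeasure η] :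
    ENNReal.ofReal ((1 - maxError ν Ψ) * log (Fintype.card ι))
      ≤ 1 + (Fintype.card ι : ℝ≥0∞)⁻¹ * ∑ i, klDiv (ν i) η := by
  have hcard : 0 < (Fintype.card ι : ℝ) := by exact_mod_cast Fintype.card_pos
  by_cases hfin : ∀ i, klDiv (ν i) η ≠ ∞
  · have hreal := one_sub_maxError_mul_log_card_le hΨ η fun i ↦
      measureReal_mul_log_le (hfin i) (hΨ (measurableSet_singleton i)) hcard
    refine (ENNReal.ofReal_le_ofReal hreal).trans_eq ?_
    rw [ENNReal.ofReal_add zero_le_one (by positivity), ENNReal.ofReal_one,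
      ENNReal.ofReal_mul (by positivity), ENNReal.ofReal_inv_of_pos hcard, ENNReal.ofReal_natCast,
      ENNReal.ofReal_sum_of_nonneg fun i _ ↦ ENNReal.toReal_nonneg]
    simp_rw [ENNReal.ofReal_toReal (hfin _)]
  · push Not at hfin
    obtain ⟨i, hi⟩ := hfin
    rw [ENNReal.sum_eq_top.2 ⟨i, Finset.mem_univ i, hi⟩, ENNReal.mul_top (by simp), add_top]
    exact le_top

lemma ofReal_one_sub_maxError_comp_mul_log_card_le [Fintype ι] [Nonempty ι]
    [MeasurableSpace ι] [MeasurableSingletonClass ι] (M : Kernel 𝓧 𝓨) [IsMarkovKernel M]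
    {P : ι → Measure 𝓧} [∀ i, IsProbabilityMeasure (P i)] (Q : Measure 𝓧)
    [IsProbabilityMeasure Q] {Ψ : 𝓨 → ι} (hΨ : Measurable Ψ) :
    ENNReal.ofReal ((1 - maxError (fun i ↦ M ∘ₘ P i) Ψ) * log (Fintype.card ι))
      ≤ 1 + (Fintype.card ι : ℝ≥0∞)⁻¹ * ∑ i, klDiv (P i) Q := by
  refine (ofReal_one_sub_maxError_mul_log_card_le hΨ (M ∘ₘ Q)).trans ?_
  gcongr
  exact klDiv_comp_right_le _ _ M

lemma integral_measureReal_kernel (M : Kernel 𝓧 𝓨) [IsMarkovKernel M] (P : Measure 𝓧) {S : Set 𝓨}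
    (hS : MeasurableSet S) : ∫ x, (M x).real S ∂P = (M ∘ₘ P).real S := by
  simp_rw [measureReal_def]
  rw [integral_toReal (M.measurable_coe hS).aemeasurable (.of_forall fun x ↦ measure_lt_top _ _),
    Measure.bind_apply hS M.aemeasurable]

variable [DecidableEq 𝓧] {n : ℕ} {M : Kernel (Fin n → 𝓧) 𝓨} [IsMarkovKernel M] {ρ : ℝ}

lemma IsZCDP.measureReal_comp_mul_log_le (hM : IsZCDP M ρ) (hρ : 0 ≤ ρ)
    {P Q : Measure (Fin n → 𝓧)} [IsFiniteMeasure P] [IsFiniteMeasure Q]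
    {Ω : Type*} [MeasurableSpace Ω] {μ : Measure Ω} {X Y : Ω → Fin n → 𝓧}
    (hX : MeasurePreserving X μ P) (hY : MeasurePreserving Y μ Q) {h : Ω → ℝ}
    (hh : Integrable h μ) (hdist : ∀ w, (hammingDist (X w) (Y w) : ℝ) ^ 2 ≤ h w)
    {S : Set 𝓨} (hS : MeasurableSet S) {c : ℝ} (hc : 0 < c) :
    (M ∘ₘ P).real S * log c ≤ ρ * ∫ w, h w ∂μ + (c - 1) * (M ∘ₘ Q).real S := by
  have hpt (w : Ω) :
      (M (X w)).real S * log c ≤ ρ * h w + (c - 1) * (M (Y w)).real S := by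
    have hfin : klDiv (M (X w)) (M (Y w)) ≠ ∞ :=
      ne_top_of_le_ne_top (by finiteness) (hM.klDiv_le (X w) (Y w))
    have hkl := (hM.toReal_klDiv_le hρ (X w) (Y w)).trans
      (mul_le_mul_of_nonneg_left (hdist w) hρ)
    linarith [measureReal_mul_log_le hfin hS hc]
  have hint (R : Measure (Fin n → 𝓧)) [IsFiniteMeasure R] {Z : Ω → Fin n → 𝓧}
      (hZ : MeasurePreserving Z μ R) : Integrable (fun w ↦ (M (Z w)).real S) μ :=
    hZ.integrable_comp_of_integrable (Kernel.IsMarkovKernel.integrable R M hS)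
  have hlaw (R : Measure (Fin n → 𝓧)) {Z : Ω → Fin n → 𝓧} (hZ : MeasurePreserving Z μ R) :
      ∫ w, (M (Z w)).real S ∂μ = (M ∘ₘ R).real S := by
    have hmeas : Measurable fun x ↦ (M x).real S := (M.measurable_coe hS).ennreal_toReal
    rw [← integral_measureReal_kernel M R hS, ← hZ.map_eq,
      integral_map hZ.measurable.aemeasurable hmeas.aestronglyMeasurable]
  have := integral_mono ((hint P hX).mul_const (log c))
    ((hh.const_mul ρ).add ((hint Q hY).const_mul (c - 1))) hpt
  simp only [Pi.add_apply] at this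
  rwa [integral_add (hh.const_mul ρ) ((hint Q hY).const_mul (c - 1)), integral_mul_const,
    integral_const_mul, integral_const_mul, hlaw P hX, hlaw Q hY] at this

lemma IsZCDP.measureReal_comp_mul_log_le_tvDist (hM : IsZCDP M ρ) (hρ : 0 ≤ ρ)
    {P Q : Measure (Fin n → 𝓧)} [IsProbabilityMeasure P] [IsProbabilityMeasure Q] {S : Set 𝓨}
    (hS : MeasurableSet S) {c : ℝ} (hc : 0 < c) :
    (M ∘ₘ P).real S * log c ≤ n ^ 2 * ρ * tvDist P Q + (c - 1) * (M ∘ₘ Q).real S := by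
  obtain ⟨μ, X, Y, D, hXY, hD⟩ :=
    exists_isCoupling_measureReal_le_tvDist (P := P) (Q := Q) (by simp)
  have := hXY.isProbabilityMeasure
  have hmean : ρ * ∫ w, D.indicator (fun _ ↦ (Fintype.card (Fin n) : ℝ) ^ 2) w ∂μ
      ≤ n ^ 2 * ρ * tvDist P Q := by
    rw [integral_indicator_const _ hXY.measurableSet, smul_eq_mul, Fintype.card_fin]
    grw [hD]
    exact le_of_eq (by ring)
  have hcoupled := hM.measureReal_comp_mul_log_le hρ hXY.measurePreserving_left
    hXY.measurePreserving_right ((integrable_const _).indicator hXY.measurableSet)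
    hXY.sq_hammingDist_le_indicator hS hc
  linarith

lemma IsZCDP.measureReal_comp_pi_mul_log_le_tvDist (hM : IsZCDP M ρ) (hρ : 0 ≤ ρ)
    {p q : Measure 𝓧} [IsProbabilityMeasure p] [IsProbabilityMeasure q] {S : Set 𝓨}
    (hS : MeasurableSet S) {c : ℝ} (hc : 0 < c) :
    (M ∘ₘ Measure.pi fun _ ↦ p).real S * log c
      ≤ n ^ 2 * ρ * ((n : ℝ)⁻¹ * tvDist p q + tvDist p q ^ 2)
        + (c - 1) * (M ∘ₘ Measure.pi fun _ ↦ q).real S := by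
  obtain ⟨μ, X, Y, D, hXY, hD⟩ :=
    exists_isCoupling_measureReal_le_tvDist (P := p) (Q := q) (by simp)
  have := hXY.isProbabilityMeasure
  have hmean : ρ * ∫ w : Fin n → _, (∑ i, D.indicator 1 (w i)) ^ 2 ∂Measure.pi (fun _ ↦ μ)
      ≤ n ^ 2 * ρ * ((n : ℝ)⁻¹ * tvDist p q + tvDist p q ^ 2) := by
    grw [integral_sum_indicator_one_sq_le hXY.measurableSet, hD, Fintype.card_fin]
    rcases eq_or_ne n 0 with rfl | hn
    · simp
    · refine le_of_eq ?_
      field_simp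
  have hcoupled := hM.measureReal_comp_mul_log_le hρ
    (measurePreserving_pi _ _ fun _ : Fin n ↦ hXY.measurePreserving_left)
    (measurePreserving_pi _ _ fun _ : Fin n ↦ hXY.measurePreserving_right)
    (integrable_sum_indicator_one_sq hXY.measurableSet)
    (fun w ↦ pow_le_pow_left₀ (by positivity) (hXY.hammingDist_le_sum_indicator w) 2) hS hc
  linarith

variable [Fintype ι] [Nonempty ι] [MeasurableSpace ι] [MeasurableSingletonClass ι] {Ψ : 𝓨 → ι}

lemma IsZCDP.one_sub_maxError_mul_log_card_le_tvDist (hM : IsZCDP M ρ) (hρ : 0 ≤ ρ)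
    {P : ι → Measure (Fin n → 𝓧)} [∀ i, IsProbabilityMeasure (P i)] (hΨ : Measurable Ψ) :
    (1 - maxError (fun i ↦ M ∘ₘ P i) Ψ) * log (Fintype.card ι)
      ≤ 1 + n ^ 2 * ρ / Fintype.card ι ^ 2 * ∑ i, ∑ j, tvDist (P i) (P j) := by
  have hcard : 0 < (Fintype.card ι : ℝ) := by exact_mod_cast Fintype.card_pos
  refine (one_sub_maxError_mul_log_card_le_of_pairwise
    (K := fun i j ↦ n ^ 2 * ρ * tvDist (P i) (P j)) hΨ fun i j ↦
      hM.measureReal_comp_mul_log_le_tvDist hρ (hΨ (measurableSet_singleton i)) hcard).trans_eq ?_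
  simp_rw [← Finset.mul_sum]
  ring

lemma IsZCDP.one_sub_maxError_pi_mul_log_card_le_tvDist (hM : IsZCDP M ρ) (hρ : 0 ≤ ρ)
    {p : ι → Measure 𝓧} [∀ i, IsProbabilityMeasure (p i)] (hΨ : Measurable Ψ) :
    (1 - maxError (fun i ↦ M ∘ₘ Measure.pi fun _ ↦ p i) Ψ) * log (Fintype.card ι)
      ≤ 1 + n ^ 2 * ρ / Fintype.card ι ^ 2
        * ∑ i, ∑ j, ((n : ℝ)⁻¹ * tvDist (p i) (p j) + tvDist (p i) (p j) ^ 2) := by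
  have hcard : 0 < (Fintype.card ι : ℝ) := by exact_mod_cast Fintype.card_pos
  refine (one_sub_maxError_mul_log_card_le_of_pairwise
    (K := fun i j ↦ n ^ 2 * ρ * ((n : ℝ)⁻¹ * tvDist (p i) (p j) + tvDist (p i) (p j) ^ 2)) hΨ
    fun i j ↦ hM.measureReal_comp_pi_mul_log_le_tvDist hρ (hΨ (measurableSet_singleton i))
      hcard).trans_eq ?_
  simp_rw [← Finset.mul_sum]
  ring

end Mechanism

/-- **Fano-type bound for `ρ`-zCDP**: if `M` is `ρ`-zCDP, then for any test `Ψ` with `N`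
outcomes, any probability distributions `P 1, …, P N` on `𝓧^n` and any probability
distribution `Q` with `P i ≪ Q` for all `i`, the maximal error
`max_i P_{X ∼ P i, M}(Ψ(M(X)) ≠ i)` satisfies the two lower bounds
`1 - (1 + (1/N) ∑ i KL(P i ‖ Q)) / ln N` (stated equivalently as
`(1 - max) ln N ≤ 1 + (1/N) ∑ i KL(P i ‖ Q)` in `ℝ≥0∞` to accommodate infinite KL) and
`1 - (1 + (n²ρ/N²) ∑_{i,j} 2 TV(P i, P j)/(1 + TV(P i, P j))) / ln N`; moreover, when
`P i = (p i)^{⊗n}` are product distributions, it satisfies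
`1 - (1 + (n²ρ/N²) ∑_{i,j} ((1/n) r i j + (r i j)²)) / ln N` where
`r i j = 2 TV(p i, p j)/(1 + TV(p i, p j))`. -/
theorem fano_zcdp [DecidableEq 𝓧] {n N : ℕ} (hN : 2 ≤ N)
    (M : Kernel (Fin n → 𝓧) 𝓨) [IsMarkovKernel M]
    (ρ : ℝ) (hρ : 0 < ρ) (hzCDP : IsZCDP M ρ)
    (Ψ : 𝓨 → Fin N) (hΨ : Measurable Ψ) :
    (∀ P : Fin N → Measure (Fin n → 𝓧), (∀ i, IsProbabilityMeasure (P i)) →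
      (∀ Q : Measure (Fin n → 𝓧), IsProbabilityMeasure Q → (∀ i, P i ≪ Q) →
        ENNReal.ofReal
            ((1 - ⨆ i : Fin N, (∫⁻ x, M x {y | Ψ y ≠ i} ∂(P i)).toReal) * Real.log N)
          ≤ 1 + (N : ℝ≥0∞)⁻¹ * ∑ i : Fin N, klDiv' (P i) Q) ∧
      (1 - (1 + (n : ℝ) ^ 2 * ρ / (N : ℝ) ^ 2 *
            ∑ i : Fin N, ∑ j : Fin N,
              2 * tvDist (P i) (P j) / (1 + tvDist (P i) (P j))) / Real.log N
        ≤ ⨆ i : Fin N, (∫⁻ x, M x {y | Ψ y ≠ i} ∂(P i)).toReal)) ∧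
    (∀ p : Fin N → Measure 𝓧, (∀ i, IsProbabilityMeasure (p i)) →
      1 - (1 + (n : ℝ) ^ 2 * ρ / (N : ℝ) ^ 2 *
            ∑ i : Fin N, ∑ j : Fin N,
              ((n : ℝ)⁻¹ * (2 * tvDist (p i) (p j) / (1 + tvDist (p i) (p j)))
                + (2 * tvDist (p i) (p j) / (1 + tvDist (p i) (p j))) ^ 2)) / Real.log N
        ≤ ⨆ i : Fin N,
            (∫⁻ x, M x {y | Ψ y ≠ i} ∂(Measure.pi fun _ : Fin n => p i)).toReal) := by
  have : NeZero N := ⟨by omega⟩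
  have hlog : 0 < log N := log_pos (by exact_mod_cast hN)
  refine ⟨fun P _ ↦ ⟨fun Q _ _ ↦ ?_, ?_⟩, fun p _ ↦ ?_⟩ <;>
    rw [iSup_toReal_lintegral_eq_maxError M hΨ]
  · simp_rw [klDiv'_eq_klDiv]
    simpa only [Fintype.card_fin] using ofReal_one_sub_maxError_comp_mul_log_card_le M Q hΨ
  · rw [sub_le_comm, le_div_iff₀ hlog]
    have h := hzCDP.one_sub_maxError_mul_log_card_le_tvDist hρ.le (P := P) hΨ
    rw [Fintype.card_fin] at h
    refine h.trans ?_
    gcongr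
    exact tvDist_le_two_mul_div
  · rw [sub_le_comm, le_div_iff₀ hlog]
    have h := hzCDP.one_sub_maxError_pi_mul_log_card_le_tvDist hρ.le (p := p) hΨ
    rw [Fintype.card_fin] at h
    refine h.trans ?_
    gcongr
    · exact tvDist_le_two_mul_div
    · exact tvDist_nonneg_s15
    · exact tvDist_le_two_mul_div
end
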